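/- Let q ≥ 1 and D ≥ 1 be integers and let G be a finite simple graph with maximum degree at most D that admits an ordering v_1, …, v_n of its vertices in which every v_i has at most q neighbours among v_1, …, v_{i−1}. Then in the square G², every v_i has at most (2q−1)·D neighbours among v_1, …, v_{i−1}. Consequently G² is ((2q−1)D)-degenerate, and for every assignment of finite lists of at least (2q−1)D + 1 colours to the vertices there is a proper colouring of G² choosing each colour from the corresponding list; in particular ch(G²) ≤ (2q−1)D + 1. -/

import Mathlib

/-!
Let `u` be an earlier neighbour of `v` in `G²`: a neighbour of `v`, or a neighbour of some neighbour
`w` of `v`. An earlier neighbour `w` of `v` accounts for at most `D` such `u`, namely `w` itself and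
its neighbours other than `v`; there are at most `q` such `w`. A later neighbour `w` of `v` accounts
for at most `q - 1`, since `u` and `v` both precede `w`; there are at most `D` such `w`. Hence there
are at most `q * D + D * (q - 1)` such `u`. Colouring greedily along the ordering does the rest.
-/

theorem encard_biUnion_le_encard_mul {α β : Type*} {s : Set α} {t : α → Set β} {n : ℕ∞}
    (ht : ∀ a ∈ s, (t a).encard ≤ n) : (⋃ a ∈ s, t a).encard ≤ s.encard * n := by
  obtain hs | hs := s.finite_or_infinite
  · lift s to Finset α using hs
    calc (⋃ a ∈ s, t a).encard ≤ ∑ a ∈ s, (t a).encard := s.set_encard_biUnion_le t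
      _ ≤ s.card • n := Finset.sum_le_card_nsmul s _ n ht
      _ = (s : Set α).encard * n := by rw [nsmul_eq_mul, Set.encard_coe_eq_coe_finsetCard]
  · obtain rfl | hn := eq_or_ne n 0
    · simp_all
    · simp [hs.encard_eq, ENat.top_mul hn]

theorem exists_forall_of_wellFounded {V C : Type*} {r : V → V → Prop} (hr : WellFounded r)
    {P : ∀ v, (∀ u, r u v → C) → C → Prop} (hP : ∀ v f, ∃ a, P v f a) :
    ∃ c : V → C, ∀ v, P v (fun u _ ↦ c u) (c v) := by
  choose next hnext using hP
  refine ⟨hr.fix next, fun v ↦ ?_⟩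
  have hv := hnext v fun u _ ↦ hr.fix next u
  rwa [← hr.fix_eq next v] at hv

/-- The square `G²` of a graph: distinct vertices are adjacent when they are at distance at most two
in `G`, spelled out as being adjacent or having a common neighbour. -/
def graphSquare {V : Type*} (G : SimpleGraph V) : SimpleGraph V where
  Adj u v := u ≠ v ∧ (G.Adj u v ∨ ∃ w, G.Adj u w ∧ G.Adj w v)
  symm := ⟨by
    rintro u v ⟨hne, huv | ⟨w, huw, hwv⟩⟩
    · exact ⟨hne.symm, .inl huv.symm⟩
    · exact ⟨hne.symm, .inr ⟨w, hwv.symm, huw.symm⟩⟩⟩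
  loopless := ⟨fun _ h ↦ h.1 rfl⟩

/-- The neighbours of `v` that precede it in the vertex ordering given by the ranks `ord`. -/
def earlierNeighborSet {V ι : Type*} [LT ι] (G : SimpleGraph V) (ord : V → ι) (v : V) : Set V :=
  {u | G.Adj v u ∧ ord u < ord v}

/-- The vertex ordering given by the ranks `ord` witnesses that `G` is `k`-degenerate. Ranks may lie
in any ordered type, so that infinite graphs are covered; `Set.encard` makes the bound include
finiteness of the sets of earlier neighbours. -/
def IsDegeneracyOrder {V ι : Type*} [LT ι] (G : SimpleGraph V) (ord : V → ι) (k : ℕ) : Prop :=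
  ∀ v, (earlierNeighborSet G ord v).encard ≤ k

theorem isDegeneracyOrder_iff_card_filter_le {V ι : Type*} [Fintype V] [LT ι] {G : SimpleGraph V}
    {ord : V → ι} {k : ℕ} [∀ v, DecidablePred fun u ↦ G.Adj v u ∧ ord u < ord v] :
    IsDegeneracyOrder G ord k ↔
      ∀ v, (Finset.univ.filter fun u ↦ G.Adj v u ∧ ord u < ord v).card ≤ k := by
  refine forall_congr' fun v ↦ ?_
  rw [← Nat.cast_le (α := ℕ∞), ← Set.encard_coe_eq_coe_finsetCard, Finset.coe_filter_univ,
    earlierNeighborSet]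

section

variable {V ι : Type*} [LinearOrder ι] {G : SimpleGraph V} {ord : V → ι}

theorem earlierNeighborSet_graphSquare_subset (hinj : ord.Injective) (v : V) :
    earlierNeighborSet (graphSquare G) ord v ⊆
      (⋃ w ∈ earlierNeighborSet G ord v, insert w (G.neighborSet w \ {v})) ∪
        ⋃ w ∈ G.neighborSet v ∩ {w | ord v < ord w}, earlierNeighborSet G ord w \ {v} := by
  rintro u ⟨⟨hvu, hadj | ⟨w, hvw, hwu⟩⟩, hlt⟩
  · exact .inl <| Set.mem_biUnion ⟨hadj, hlt⟩ <| Set.mem_insert u _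
  · obtain hwv | hwv := (hinj.ne hvw.ne').lt_or_gt
    · exact .inl <| Set.mem_biUnion ⟨hvw, hwv⟩ <| Set.mem_insert_of_mem w ⟨hwu, hvu.symm⟩
    · exact .inr <| Set.mem_biUnion ⟨hvw, hwv⟩ ⟨⟨hwu, hlt.trans hwv⟩, hvu.symm⟩

theorem IsDegeneracyOrder.square {p D : ℕ} (hG : IsDegeneracyOrder G ord (p + 1))
    (hinj : ord.Injective) (hmax : ∀ v, (G.neighborSet v).encard ≤ D) :
    IsDegeneracyOrder (graphSquare G) ord ((2 * p + 1) * D) := by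
  intro v
  have via_earlier : ∀ w ∈ earlierNeighborSet G ord v,
      (insert w (G.neighborSet w \ {v})).encard ≤ D := fun w hw ↦
    (Set.encard_exchange G.notMem_neighborSet_self hw.1.symm).trans_le (hmax w)
  have via_later : ∀ w ∈ G.neighborSet v ∩ {w | ord v < ord w},
      (earlierNeighborSet G ord w \ {v}).encard ≤ p := by
    rintro w ⟨hvw, hlt⟩
    have hv : v ∈ earlierNeighborSet G ord w := ⟨hvw.symm, hlt⟩
    rw [← ENat.add_le_add_iff_right ENat.one_ne_top, Set.encard_sdiff_singleton_add_one hv]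
    exact_mod_cast hG w
  have card_later : (G.neighborSet v ∩ {w | ord v < ord w}).encard ≤ D :=
    (Set.encard_le_encard Set.inter_subset_left).trans (hmax v)
  calc (earlierNeighborSet (graphSquare G) ord v).encard
    _ ≤ _ := Set.encard_le_encard (earlierNeighborSet_graphSquare_subset hinj v)
    _ ≤ _ := Set.encard_union_le _ _
    _ ≤ (earlierNeighborSet G ord v).encard * D +
          (G.neighborSet v ∩ {w | ord v < ord w}).encard * p :=
        add_le_add (encard_biUnion_le_encard_mul via_earlier)
          (encard_biUnion_le_encard_mul via_later)
    _ ≤ (p + 1 : ℕ) * D + D * p := by gcongr; exact hG v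
    _ = ((2 * p + 1) * D : ℕ) := by push_cast; ring

theorem IsDegeneracyOrder.exists_coloring_mem [WellFoundedLT ι] {C : Type*} {k : ℕ}
    (hG : IsDegeneracyOrder G ord k) (hinj : ord.Injective) {L : V → Set C}
    (hL : ∀ v, k < (L v).encard) : ∃ c : G.Coloring C, ∀ v, c v ∈ L v := by
  have exists_free_color (v : V) (f : ∀ u, ord u < ord v → C) :
      ∃ a, a ∈ L v ∧ ∀ u (hu : ord u < ord v), G.Adj v u → f u hu ≠ a := by
    let color (u : earlierNeighborSet G ord v) : C := f u u.2.2
    let used : Set C := Set.range color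
    have used_lt : used.encard < (L v).encard := calc
      used.encard ≤ (earlierNeighborSet G ord v).encard := by
        simpa [used] using Set.encard_image_le color .univ
      _ ≤ k := hG v
      _ < _ := hL v
    obtain ⟨a, haL, ha⟩ := Set.not_subset.mp (mt Set.encard_le_encard used_lt.not_ge)
    exact ⟨a, haL, fun u hu hvu h ↦ ha ⟨⟨u, hvu, hu⟩, h⟩⟩
  obtain ⟨c, hc⟩ := exists_forall_of_wellFounded (InvImage.wf ord wellFounded_lt) exists_free_color
  refine ⟨.mk c fun {u v} huv ↦ ?_, fun v ↦ (hc v).1⟩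
  obtain hlt | hlt := (hinj.ne huv.ne).lt_or_gt
  · exact (hc v).2 u hlt huv.symm
  · exact ((hc u).2 v hlt huv).symm

end

theorem stmt_9_general {V ι C : Type*} [LinearOrder ι] [WellFoundedLT ι] (G : SimpleGraph V)
    (q D : ℕ) (hq : 1 ≤ q) (hmax : ∀ v, (G.neighborSet v).encard ≤ D)
    (ord : V → ι) (hinj : ord.Injective) (hord : IsDegeneracyOrder G ord q) :
    IsDegeneracyOrder (graphSquare G) ord ((2 * q - 1) * D) ∧
      ∀ L : V → Set C, (∀ v, ((2 * q - 1) * D : ℕ) < (L v).encard) →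
        ∃ c : (graphSquare G).Coloring C, ∀ v, c v ∈ L v := by
  obtain ⟨p, rfl⟩ := Nat.exists_eq_add_of_le' hq
  have hsquare : IsDegeneracyOrder (graphSquare G) ord ((2 * (p + 1) - 1) * D) :=
    hord.square hinj hmax
  exact ⟨hsquare, fun L hL ↦ hsquare.exists_coloring_mem hinj hL⟩

/-- Krumke–Marathe–Ravi: if `G` is `q`-degenerate (witnessed by an ordering)
and has maximum degree at most `D`, then in `G²` every vertex has at most
`(2q-1)D` earlier neighbours; hence `G²` is `(2q-1)D`-degenerate and is
list-colourable from lists of size `(2q-1)D + 1`. -/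
theorem stmt_9 {V : Type*} [Fintype V] [DecidableEq V] (G : SimpleGraph V)
    [DecidableRel G.Adj] (q D : ℕ) (hq : 1 ≤ q) (hD : 1 ≤ D)
    (hmax : ∀ v, G.degree v ≤ D)
    (ord : V ≃ Fin (Fintype.card V))
    (hord : ∀ v, (Finset.univ.filter (fun u => G.Adj v u ∧ ord u < ord v)).card ≤ q) :
    (∀ v, (Finset.univ.filter (fun u =>
        (u ≠ v ∧ (G.Adj v u ∨ ∃ w, G.Adj v w ∧ G.Adj w u)) ∧ ord u < ord v)).card
        ≤ (2 * q - 1) * D) ∧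
    (∀ L : V → Finset ℤ, (∀ v, (2 * q - 1) * D + 1 ≤ (L v).card) →
      ∃ c : V → ℤ, (∀ v, c v ∈ L v) ∧
        ∀ u v, u ≠ v → (G.Adj u v ∨ ∃ w, G.Adj u w ∧ G.Adj w v) → c u ≠ c v) := by
  have hmax' (v : V) : (G.neighborSet v).encard ≤ D := by
    rw [Set.encard_eq_coe_toFinset_card]
    exact_mod_cast hmax v
  obtain ⟨hsquare, hcolor⟩ := stmt_9_general (C := ℤ) G q D hq hmax' ord ord.injective
    (isDegeneracyOrder_iff_card_filter_le.mpr hord)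
  refine ⟨fun v ↦ ?_, fun L hL ↦ ?_⟩
  · classical
    convert isDegeneracyOrder_iff_card_filter_le.mp hsquare v using 5
    exact and_congr_left' ne_comm
  · obtain ⟨c, hc⟩ := hcolor (fun v ↦ L v) fun v ↦ by
      rw [Set.encard_coe_eq_coe_finsetCard]
      exact_mod_cast hL v
    exact ⟨c, hc, fun u v huv hadj ↦ c.valid ⟨huv, hadj⟩⟩
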